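/- arXiv:2605.03631 — 13 statements merged into one kernel-verified Lean document; each statement's English description precedes it below -/
import Mathlib

section
/- Let M be the dyadic matrix with signature m : V → 𝔽₂. If the weight of m is even then M * M = 0, and if the weight of m is odd then M * M = 1 (the identity matrix). Consequently, M is invertible if and only if the weight of m is odd, and in that case M⁻¹ = M. -/
/-- `V ℓ` is the 𝔽₂-vector space `Fin ℓ → ZMod 2` with bitwise-XOR addition. -/
abbrev V (ℓ : ℕ) := Fin ℓ → ZMod 2

/-- The weight of an `𝔽₂`-valued function, read modulo 2, is the sum of its values. -/
theorem sum_eq_card_support_zmod_two {α : Type*} [Fintype α] (f : α → ZMod 2) :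
    ∑ v, f v = ((Finset.univ.filter fun v => f v ≠ 0).card : ZMod 2) := by
  rw [Finset.card_filter, Nat.cast_sum]
  refine Finset.sum_congr rfl fun v _ => ?_
  generalize f v = x
  revert x
  decide

/-- The square of a dyadic matrix is the scalar matrix given by the weight of its signature. -/
theorem dyadic_mul_self {ℓ : ℕ} {m : V ℓ → ZMod 2} {M : Matrix (V ℓ) (V ℓ) (ZMod 2)}
    (hM : ∀ a b, M a b = m (a + b)) :
    M * M = ((Finset.univ.filter fun v => m v ≠ 0).card : ZMod 2) •
      (1 : Matrix (V ℓ) (V ℓ) (ZMod 2)) := by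
  ext a b
  simp only [Matrix.mul_apply, hM, Matrix.smul_apply, smul_eq_mul]
  rcases eq_or_ne a b with rfl | hab
  · rw [Matrix.one_apply_eq, mul_one, ← sum_eq_card_support_zmod_two,
      ← Equiv.sum_comp (Equiv.addLeft a) m]
    refine Finset.sum_congr rfl fun c _ => ?_
    rw [add_comm c a, Equiv.coe_addLeft]
    generalize m (a + c) = x
    revert x
    decide
  · rw [Matrix.one_apply_ne hab, mul_zero]
    have hadd : ∀ v : V ℓ, v + v = 0 := fun v => funext fun i => CharTwo.add_self_eq_zero (v i)
    have hleft : ∀ c, a + (c + (a + b)) = c + b := fun c => by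
      rw [show a + (c + (a + b)) = (a + a) + (c + b) by abel, hadd, zero_add]
    have hright : ∀ c, c + (a + b) + b = a + c := fun c => by
      rw [show c + (a + b) + b = a + c + (b + b) by abel, hadd, add_zero]
    refine Finset.sum_involution (fun c _ => c + (a + b)) ?_ ?_ (fun _ _ => Finset.mem_univ _) ?_
    · intro c _
      rw [hleft, hright, mul_comm (m (c + b)), CharTwo.add_self_eq_zero]
    · intro c _ _ h
      have hz : a + b = 0 := add_eq_left.mp h
      exact hab (add_right_cancel (hz.trans (hadd b).symm))
    · intro c _
      rw [add_assoc, hadd, add_zero]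

/-- For a dyadic matrix `M` with signature `m`: `M * M = 0` if the weight of `m` is even,
`M * M = 1` if it is odd; `M` is invertible iff the weight of `m` is odd, in which case
`M⁻¹ = M`. -/
theorem dyadic_sq (ℓ : ℕ) (m : V ℓ → ZMod 2)
    (M : Matrix (V ℓ) (V ℓ) (ZMod 2))
    (hM : ∀ a b, M a b = m (a + b)) :
    (Even (Finset.univ.filter fun v => m v ≠ 0).card → M * M = 0) ∧
    (Odd (Finset.univ.filter fun v => m v ≠ 0).card → M * M = 1) ∧
    (IsUnit M ↔ Odd (Finset.univ.filter fun v => m v ≠ 0).card) ∧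
    (Odd (Finset.univ.filter fun v => m v ≠ 0).card → M⁻¹ = M) := by
  have heven (h : Even (Finset.univ.filter fun v => m v ≠ 0).card) : M * M = 0 := by
    rw [dyadic_mul_self hM, (ZMod.natCast_eq_zero_iff_even).mpr h, zero_smul]
  have hodd (h : Odd (Finset.univ.filter fun v => m v ≠ 0).card) : M * M = 1 := by
    rw [dyadic_mul_self hM, (ZMod.natCast_eq_one_iff_odd).mpr h, one_smul]
  refine ⟨heven, hodd, ⟨fun hu => ?_, fun h => IsUnit.of_mul_eq_one M (hodd h)⟩,
    fun h => Matrix.inv_eq_left_inv (hodd h)⟩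
  by_contra h
  exact (hu.mul hu).ne_zero (heven (Nat.not_odd_iff_even.mp h))
end

section
/- Let M be the dyadic matrix with signature m : V → 𝔽₂, and suppose the weight of m is odd. Then (i) M is nonsingular (invertible), (ii) M⁻¹ = M, and (iii) M * Mᵀ = 1 (the identity matrix). -/
open Matrix

/-- The sum of an odd-weight signature is `1`. -/
theorem sum_eq_one_of_odd_weight {ι : Type*} [Fintype ι] (m : ι → ZMod 2)
    (hodd : Odd (Finset.univ.filter fun v => m v ≠ 0).card) : ∑ v, m v = 1 := by
  have hite : ∀ x : ZMod 2, x = if x ≠ 0 then 1 else 0 := by decide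
  rw [Finset.sum_congr rfl fun v _ => hite (m v), Finset.sum_boole]
  exact ZMod.natCast_eq_one_iff_odd.mpr hodd

/-- Over `𝔽₂`, the autocorrelation of a signature vanishes away from the diagonal: the summands
cancel in pairs under the translation `b ↦ b + (a + c)`. -/
theorem sum_mul_add_eq_zero {ℓ : ℕ} (m : V ℓ → ZMod 2) {a c : V ℓ} (hac : a ≠ c) :
    ∑ b, m (a + b) * m (b + c) = 0 := by
  have hself : ∀ v : V ℓ, v + v = 0 := fun v => funext fun i => CharTwo.add_self_eq_zero (v i)
  refine Finset.sum_involution (fun b _ => b + (a + c)) (fun b _ => ?_) (fun b _ _ hb => hac ?_)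
    (fun _ _ => Finset.mem_univ _) (fun b _ => ?_)
  · have ha : a + (b + (a + c)) = b + c := by
      rw [show a + (b + (a + c)) = (a + a) + (b + c) by abel, hself, zero_add]
    have hc : b + (a + c) + c = a + b := by
      rw [show b + (a + c) + c = (a + b) + (c + c) by abel, hself, add_zero]
    rw [ha, hc, mul_comm (m (b + c))]
    exact CharTwo.add_self_eq_zero _
  · have hsum : a + c = 0 := add_eq_left.mp hb
    rw [← add_zero a, ← hself c, ← add_assoc, hsum, zero_add]
  · rw [add_assoc, hself, add_zero]

/-- A dyadic matrix whose signature has odd weight is nonsingular, is its own inverse,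
and satisfies `M * Mᵀ = 1`. -/
theorem dyadic_oddWeight_invertible (ℓ : ℕ) (m : V ℓ → ZMod 2)
    (M : Matrix (V ℓ) (V ℓ) (ZMod 2))
    (hM : ∀ a b, M a b = m (a + b))
    (hodd : Odd (Finset.univ.filter fun v => m v ≠ 0).card) :
    IsUnit M ∧ M⁻¹ = M ∧ M * Mᵀ = 1 := by
  have hsymm : Mᵀ = M := by
    ext a b
    rw [transpose_apply, hM, hM, add_comm]
  have hsq : M * M = 1 := by
    ext a c
    simp only [mul_apply, hM]
    rcases eq_or_ne a c with rfl | hac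
    · have hidem : ∀ x : ZMod 2, x * x = x := by decide
      simp only [add_comm _ a, hidem, one_apply_eq]
      rw [← sum_eq_one_of_odd_weight m hodd]
      exact Equiv.sum_comp (Equiv.addLeft a) m
    · rw [one_apply_ne hac, sum_mul_add_eq_zero m hac]
  exact ⟨IsUnit.of_mul_eq_one M hsq, inv_eq_right_inv hsq, by rw [hsymm, hsq]⟩
end

section
/- Let H be a dyadic matrix over 𝔽₂ and let s ∈ V. Then for every vector c : V → 𝔽₂, one has H.mulVec c = 0 if and only if H.mulVec (fun x => c (x + s)) = 0. In other words, the coordinate permutation x ↦ x + s (the permutation realized by the DPM D^(s)) is an automorphism of the code ker H, so the automorphism group of any dyadic code contains all 2^ℓ dyadic permutations. -/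
/-- Multiplying the translate of `c` by a dyadic matrix translates the product. -/
lemma dyadic_mulVec_translate {G R : Type*} [AddCommGroup G] [Fintype G]
    [NonUnitalNonAssocSemiring R] {m : G → R} {H : Matrix G G R}
    (hH : ∀ a b, H a b = m (a + b)) (s : G) (c : G → R) (a : G) :
    H.mulVec (fun x => c (x + s)) (a + s) = H.mulVec c a := by
  simp only [Matrix.mulVec, dotProduct, hH]
  refine Fintype.sum_equiv (Equiv.addRight s) _ _ fun b => ?_
  simp only [Equiv.coe_addRight]
  rw [add_right_comm, add_assoc]

/-- For a dyadic matrix `H`, the coordinate permutation `x ↦ x + s` (realized by the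
DPM `D^(s)`) is an automorphism of the code `ker H`. -/
theorem dyadic_code_automorphism (ℓ : ℕ) (m : V ℓ → ZMod 2)
    (H : Matrix (V ℓ) (V ℓ) (ZMod 2))
    (hH : ∀ a b, H a b = m (a + b))
    (s : V ℓ) (c : V ℓ → ZMod 2) :
    H.mulVec c = 0 ↔ H.mulVec (fun x => c (x + s)) = 0 := by
  simp only [funext_iff, Pi.zero_apply]
  rw [← (Equiv.addRight s).forall_congr_right
    (q := fun a => H.mulVec (fun x => c (x + s)) a = 0)]
  simp only [Equiv.coe_addRight, dyadic_mulVec_translate hH]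
end

section
/- Let G : Matrix (Fin k × V) (Fin n × V) 𝔽₂ be quasi-dyadic, i.e., for all i : Fin k and j : Fin n there is a signature m_{ij} : V → 𝔽₂ with G (i, a) (j, b) = m_{ij} (a + b) for all a, b ∈ V. Fix s ∈ V and let π_s : Fin n × V → Fin n × V be the permutation (j, b) ↦ (j, b + s). Then a vector x : (Fin n × V) → 𝔽₂ lies in the 𝔽₂-linear span of the rows of G if and only if x ∘ π_s lies in the 𝔽₂-linear span of the rows of G. Hence the automorphism group of the code generated by G contains the 2^ℓ permutations π_s. -/
/-- The row span of a quasi-dyadic matrix is closed under translating every block by `s`. -/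
theorem translate_mem_rowSpan_of_quasiDyadic {ℓ k n : ℕ}
    {G : Matrix (Fin k × V ℓ) (Fin n × V ℓ) (ZMod 2)}
    (hG : ∀ (i : Fin k) (j : Fin n), ∃ mij : V ℓ → ZMod 2,
      ∀ a b, G (i, a) (j, b) = mij (a + b))
    (s : V ℓ) {x : (Fin n × V ℓ) → ZMod 2}
    (hx : x ∈ Submodule.span (ZMod 2) (Set.range fun i => G i)) :
    (fun p : Fin n × V ℓ => x (p.1, p.2 + s)) ∈
      Submodule.span (ZMod 2) (Set.range fun i => G i) := by
  induction hx using Submodule.span_induction with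
  | mem x hx =>
    obtain ⟨⟨i, a⟩, rfl⟩ := hx
    refine Submodule.subset_span ⟨(i, a + s), ?_⟩
    funext ⟨j, b⟩
    obtain ⟨m, hm⟩ := hG i j
    simp only [hm, add_assoc, add_comm s b]
  | zero => exact Submodule.zero_mem _
  | add x y _ _ hx hy => exact Submodule.add_mem _ hx hy
  | smul c x _ hx => exact Submodule.smul_mem _ c hx

/-- For a quasi-dyadic generator matrix `G`, a vector lies in the row span of `G`
iff its image under the coordinate permutation `(j, b) ↦ (j, b + s)` does; hence the
automorphism group of the generated code contains all `2^ℓ` such permutations. -/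
theorem quasiDyadic_rowSpan_automorphism (ℓ k n : ℕ)
    (G : Matrix (Fin k × V ℓ) (Fin n × V ℓ) (ZMod 2))
    (hG : ∀ (i : Fin k) (j : Fin n), ∃ mij : V ℓ → ZMod 2,
      ∀ a b, G (i, a) (j, b) = mij (a + b))
    (s : V ℓ) (x : (Fin n × V ℓ) → ZMod 2) :
    x ∈ Submodule.span (ZMod 2) (Set.range fun i => G i) ↔
      (fun p : Fin n × V ℓ => x (p.1, p.2 + s)) ∈
        Submodule.span (ZMod 2) (Set.range fun i => G i) := by
  refine ⟨translate_mem_rowSpan_of_quasiDyadic hG s, fun h => ?_⟩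
  have hs : s + s = 0 := funext fun i => CharTwo.add_self_eq_zero (s i)
  simpa [add_assoc, hs] using translate_mem_rowSpan_of_quasiDyadic hG s h
end

section
/- Let G : Matrix (Fin k × V) (Fin n × V) 𝔽₂ be quasi-dyadic, i.e., for all i : Fin k and j : Fin n there is a signature m_{ij} : V → 𝔽₂ with G (i, a) (j, b) = m_{ij} (a + b) for all a, b ∈ V. Then for every s ∈ V, G * Matrix.blockDiagonal (fun _ : Fin n => D^(s)) = Matrix.blockDiagonal (fun _ : Fin k => D^(s)) * G; that is, right multiplication of a quasi-dyadic matrix by the block-diagonal matrix with the DPM D^(s) on every diagonal block equals the corresponding left multiplication. -/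
/-- The dyadic permutation matrix (DPM) with position `s`. -/
def DPM {ℓ : ℕ} (s : V ℓ) : Matrix (V ℓ) (V ℓ) (ZMod 2) :=
  Matrix.of fun a b => if a + b = s then 1 else 0

theorem V.add_eq_iff_eq_add {ℓ : ℕ} (x y s : V ℓ) : x + y = s ↔ y = x + s := by
  have add_self : x + x = 0 := funext fun i => CharTwo.add_self_eq_zero (x i)
  constructor
  · rintro rfl
    rw [← add_assoc, add_self, zero_add]
  · rintro rfl
    rw [← add_assoc, add_self, zero_add]

/-- Right multiplication of a quasi-dyadic matrix by the block-diagonal matrix with the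
DPM `D^(s)` on every diagonal block equals the corresponding left multiplication. -/
theorem quasiDyadic_blockDiagonal_comm (ℓ k n : ℕ)
    (G : Matrix (Fin k × V ℓ) (Fin n × V ℓ) (ZMod 2))
    (hG : ∀ (i : Fin k) (j : Fin n), ∃ mij : V ℓ → ZMod 2,
      ∀ a b, G (i, a) (j, b) = mij (a + b))
    (s : V ℓ) :
    G * (Matrix.blockDiagonal fun _ : Fin n => DPM s).submatrix Prod.swap Prod.swap =
      ((Matrix.blockDiagonal fun _ : Fin k => DPM s).submatrix Prod.swap Prod.swap) * G := by
  ext ⟨i, a⟩ ⟨j, b⟩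
  obtain ⟨m, hm⟩ := hG i j
  have left_mul : ∑ x, (if x + b = s then m (a + x) else 0) = m (a + (b + s)) := by
    simp_rw [add_comm _ b, V.add_eq_iff_eq_add, Finset.sum_ite_eq', Finset.mem_univ, if_true]
  have right_mul : ∑ x, (if a + x = s then m (x + b) else 0) = m (a + s + b) := by
    simp_rw [V.add_eq_iff_eq_add, Finset.sum_ite_eq', Finset.mem_univ, if_true]
  simp only [Matrix.mul_apply, Fintype.sum_prod_type, Matrix.submatrix_apply, Prod.swap_prod_mk,
    Matrix.blockDiagonal_apply]
  rw [Finset.sum_eq_single j (by simp +contextual) (by simp),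
    Finset.sum_eq_single i (by simp +contextual [eq_comm]) (by simp)]
  simp only [DPM, Matrix.of_apply, hm, if_true, mul_ite, ite_mul, mul_one, one_mul, mul_zero,
    zero_mul, left_mul, right_mul]
  rw [add_comm b s, add_assoc]
end

section
/- Let H : Matrix (Fin r) (Fin n) 𝔽₂ satisfy the orthogonality condition H * Hᵀ = 0. If some column of H has at least two nonzero entries (in particular, if H has column weight v > 1), then the cycles condition fails: there exist row indices i ≠ i' and column indices j ≠ j' such that H i j, H i j', H i' j, and H i' j' are all nonzero, i.e., the Tanner graph of H contains a cycle of length 4. Hence no binary parity-check matrix with column weight greater than 1 can satisfy both the orthogonality and the cycles conditions. -/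
open Matrix

/-- If `H * Hᵀ = 0` and some column of `H` has at least two nonzero entries, then the
Tanner graph of `H` contains a length-4 cycle: two distinct rows share two or more
common nonzero positions. -/
theorem orthogonality_and_colWeight_implies_4cycle (r n : ℕ)
    (H : Matrix (Fin r) (Fin n) (ZMod 2))
    (horth : H * Hᵀ = 0)
    (hcol : ∃ j : Fin n, ∃ i i' : Fin r, i ≠ i' ∧ H i j ≠ 0 ∧ H i' j ≠ 0) :
    ∃ (i i' : Fin r) (j j' : Fin n), i ≠ i' ∧ j ≠ j' ∧
      H i j ≠ 0 ∧ H i j' ≠ 0 ∧ H i' j ≠ 0 ∧ H i' j' ≠ 0 := by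
  obtain ⟨j, i, i', hii, hi, hi'⟩ := hcol
  by_contra hno
  have hsum : ∑ k, H i k * H i' k = 0 := by
    simpa [Matrix.mul_apply] using congrFun (congrFun horth i) i'
  rw [Finset.sum_eq_single j] at hsum
  · exact mul_ne_zero hi hi' hsum
  · intro k _ hk
    by_contra hne
    exact hno ⟨i, i', j, k, hii, hk.symm, hi, left_ne_zero_of_mul hne, hi',
      right_ne_zero_of_mul hne⟩
  · simp
end

section
/- Let w, u ≥ 1 and let H : Matrix (Fin w × V) (Fin u × V) 𝔽₂ be a w × u array of DPMs, i.e., there exist positions ρ : Fin w → Fin u → V such that H (i, a) (j, b) = 1 if a + b = ρ i j and H (i, a) (j, b) = 0 otherwise. Then the rank of H over 𝔽₂ satisfies Matrix.rank H ≤ w · 2^ℓ − (w − 1). -/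
/-- If, in every column of a matrix whose rows are split into `n + 1` blocks indexed by `β`, the
entries of each block have the same sum, then the rank falls short of the number of rows by at
least `n`. -/
theorem Matrix.rank_add_le_of_blockSum_eq {K β ι : Type*} [Field K] [Fintype β] [Nonempty β]
    [Fintype ι] {n : ℕ} (H : Matrix (Fin (n + 1) × β) ι K)
    (h : ∀ (i : Fin n) (c : ι), ∑ a, H (i.succ, a) c = ∑ a, H (0, a) c) :
    H.rank + n ≤ (n + 1) * Fintype.card β := by
  classical
  let φ : (Fin (n + 1) × β → K) →ₗ[K] (Fin n → K) := LinearMap.pi fun i =>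
    ∑ a, LinearMap.proj (i.succ, a) - ∑ a, LinearMap.proj (0, a)
  have hφ (y : Fin (n + 1) × β → K) (i : Fin n) :
      φ y i = ∑ a, y (i.succ, a) - ∑ a, y (0, a) := by
    simp [φ, LinearMap.sum_apply]
  have hsurj : Function.Surjective φ := fun z => by
    obtain ⟨a₀⟩ := ‹Nonempty β›
    refine ⟨fun p => if p.2 = a₀ then (Fin.cons 0 z : Fin (n + 1) → K) p.1 else 0, ?_⟩
    ext i
    simp [hφ]
  have hle : LinearMap.range H.mulVecLin ≤ LinearMap.ker φ := by
    rw [Matrix.range_mulVecLin, Submodule.span_le]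
    rintro _ ⟨c, rfl⟩
    ext i
    simp [hφ, Matrix.col_apply, h]
  have hdim := φ.finrank_range_add_finrank_ker
  rw [LinearMap.range_eq_top.2 hsurj, finrank_top] at hdim
  simp only [Module.finrank_fintype_fun_eq_card, Fintype.card_prod, Fintype.card_fin] at hdim
  have hrank : H.rank ≤ Module.finrank K (LinearMap.ker φ) := Submodule.finrank_mono hle
  omega

/-- A `w × u` array of dyadic permutation matrices has rank at most `w·2^ℓ − (w − 1)`. -/
theorem dpmArray_rank_le (ℓ w u : ℕ) (hw : 1 ≤ w) (hu : 1 ≤ u)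
    (ρ : Fin w → Fin u → V ℓ)
    (H : Matrix (Fin w × V ℓ) (Fin u × V ℓ) (ZMod 2))
    (hH : ∀ (i : Fin w) (j : Fin u) (a b : V ℓ),
      H (i, a) (j, b) = if a + b = ρ i j then 1 else 0) :
    H.rank ≤ w * 2 ^ ℓ - (w - 1) := by
  obtain ⟨n, rfl⟩ := Nat.exists_eq_add_of_le' hw
  have hsum (i : Fin (n + 1)) (c : Fin u × V ℓ) : ∑ a, H (i, a) c = 1 := by
    obtain ⟨j, b⟩ := c
    simp [hH, ← eq_sub_iff_add_eq]
  have hrank := H.rank_add_le_of_blockSum_eq fun i c => (hsum i.succ c).trans (hsum 0 c).symm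
  simp only [Fintype.card_fun, ZMod.card, Fintype.card_fin] at hrank
  omega
end

section
/- (Construction A with w = 4.) Let t ≥ 1 and u = 2t. Fix an anchor position q ∈ V and positions z : Fin t → V, and define block rows B : Fin 4 → Fin u → Matrix V V 𝔽₂ by: B 0 (2j) = D^(q) and B 0 (2j+1) = D^(z j) for 0 ≤ j ≤ t−1; B 1 c = B 0 ((c + u − 1) mod u) (block-wise cyclic shift of B 0 to the right by one position); B 2 (2j) = D^(q) and B 2 (2j+1) = D^(z (t−1−j)) for 0 ≤ j ≤ t−1; B 3 c = B 2 ((c + u − 1) mod u). Let H : Matrix (Fin 4 × V) (Fin u × V) 𝔽₂ be given by H (i, a) (c, b) = (B i c) a b. Then H * Hᵀ = 0; in particular, for every 1 ≤ w ≤ 4 the submatrix consisting of the first w block rows also satisfies the orthogonality condition. -/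
open Matrix

/-- The product of two DPMs is the DPM of the sum of their positions. -/
theorem DPM_mul_transpose {ℓ : ℕ} (s r : V ℓ) : DPM s * (DPM r)ᵀ = DPM (s + r) := by
  ext a b
  have hsum : ∀ x y w : V ℓ, x + y = w ↔ y = x + w := fun x y w => by
    constructor
    · rintro rfl
      rw [← add_assoc, ZModModule.add_self, zero_add]
    · rintro rfl
      rw [← add_assoc, ZModModule.add_self, zero_add]
  have hcond : b + (a + s) = r ↔ a + b = s + r := by
    rw [hsum a, ← add_assoc a, ← hsum (a + s), add_comm b]
  simp only [Matrix.mul_apply, Matrix.transpose_apply, DPM, Matrix.of_apply, hsum a _ s,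
    ite_mul, one_mul, zero_mul, Finset.sum_ite_eq', Finset.mem_univ, if_true, hcond]

theorem Fin.two_mul_val_lt {t : ℕ} (j : Fin t) : 2 * j.val < 2 * t := by
  omega

theorem Fin.two_mul_val_add_one_lt {t : ℕ} (j : Fin t) : 2 * j.val + 1 < 2 * t := by
  omega

/-- A sum over `Fin (2 * t)` splits into its even and odd parts. -/
theorem Fin.sum_univ_two_mul {M : Type*} [AddCommMonoid M] (t : ℕ) (F : Fin (2 * t) → M) :
    ∑ c, F c = ∑ j : Fin t,
      (F ⟨2 * j.val, j.two_mul_val_lt⟩ + F ⟨2 * j.val + 1, j.two_mul_val_add_one_lt⟩) := by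
  rw [← (finProdFinEquiv.trans (finCongr (mul_comm t 2))).sum_comp, Fintype.sum_prod_type]
  refine Finset.sum_congr rfl fun j _ => ?_
  rw [Fin.sum_univ_two]
  congr 2 <;> ext <;> simp [add_comm]

/-- A row with anchors at even places and one with anchors at odd places, both carrying
rearrangements of the same positions, are orthogonal. -/
theorem sum_DPM_anchor_cross {ℓ t : ℕ} (q : V ℓ) (z : Fin t → V ℓ) (σ τ : Equiv.Perm (Fin t)) :
    ∑ j, (DPM (q + z (σ j)) + DPM (q + z (τ j))) = 0 := by
  rw [Finset.sum_add_distrib, Equiv.sum_comp σ fun j => DPM (q + z j),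
    Equiv.sum_comp τ fun j => DPM (q + z j), ZModModule.add_self]

/-- Rows with aligned anchors, one carrying the positions of the other in reverse order, are
orthogonal. -/
theorem sum_DPM_rev {ℓ t : ℕ} (z : Fin t → V ℓ) :
    ∑ j, (DPM 0 + DPM (z j + z j.rev)) = 0 := by
  refine Finset.sum_involution (fun j _ => j.rev) ?_ ?_ (fun _ _ => Finset.mem_univ _)
    (fun j _ => Fin.rev_rev j)
  · intro j _
    rw [Fin.rev_rev, add_comm (z j.rev), ZModModule.add_self]
  · intro j _ hne hj
    rw [hj, ZModModule.add_self, ZModModule.add_self] at hne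
    exact hne rfl

/-- The cyclic right shift of a block row, at even places. -/
theorem shift_even {α : Type*} {n : ℕ} {R S : Fin (2 * (n + 1)) → α}
    (hS : ∀ c : Fin (2 * (n + 1)),
      S c = R ⟨(c.val + 2 * (n + 1) - 1) % (2 * (n + 1)), Nat.mod_lt _ (by omega)⟩)
    (j : Fin (n + 1)) :
    S ⟨2 * j.val, j.two_mul_val_lt⟩ =
      R ⟨2 * (j - 1).val + 1, (j - 1).two_mul_val_add_one_lt⟩ := by
  rw [hS]
  congr 2
  have hj := j.isLt
  rw [Fin.coe_sub_one]
  split_ifs with h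
  · subst h
    simp only [Fin.val_zero]
    rw [Nat.mod_eq_of_lt (by omega)]
    omega
  · have hpos : j.val ≠ 0 := fun h' => h (Fin.ext h')
    rw [show 2 * j.val + 2 * (n + 1) - 1 = 2 * j.val - 1 + 2 * (n + 1) by omega,
      Nat.add_mod_right, Nat.mod_eq_of_lt (by omega)]
    omega

/-- The cyclic right shift of a block row, at odd places. -/
theorem shift_odd {α : Type*} {n : ℕ} {R S : Fin (2 * (n + 1)) → α}
    (hS : ∀ c : Fin (2 * (n + 1)),
      S c = R ⟨(c.val + 2 * (n + 1) - 1) % (2 * (n + 1)), Nat.mod_lt _ (by omega)⟩)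
    (j : Fin (n + 1)) :
    S ⟨2 * j.val + 1, j.two_mul_val_add_one_lt⟩ = R ⟨2 * j.val, j.two_mul_val_lt⟩ := by
  rw [hS]
  congr 2
  have hj := j.isLt
  rw [show 2 * j.val + 1 + 2 * (n + 1) - 1 = 2 * j.val + 2 * (n + 1) by omega,
    Nat.add_mod_right, Nat.mod_eq_of_lt (by omega)]

/-- Construction A with `w = 4` satisfies the orthogonality condition `H * Hᵀ = 0`;
in particular every submatrix made of the first `w` block rows (`1 ≤ w ≤ 4`) does. -/
theorem constructionA_orthogonal (ℓ t : ℕ) (ht : 1 ≤ t)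
    (q : V ℓ) (z : Fin t → V ℓ)
    (B : Fin 4 → Fin (2 * t) → Matrix (V ℓ) (V ℓ) (ZMod 2))
    (hB0even : ∀ j : Fin t, B 0 ⟨2 * j.val, by have := j.isLt; omega⟩ = DPM q)
    (hB0odd : ∀ j : Fin t, B 0 ⟨2 * j.val + 1, by have := j.isLt; omega⟩ = DPM (z j))
    (hB1 : ∀ c : Fin (2 * t),
      B 1 c = B 0 ⟨(c.val + 2 * t - 1) % (2 * t), Nat.mod_lt _ (by omega)⟩)
    (hB2even : ∀ j : Fin t, B 2 ⟨2 * j.val, by have := j.isLt; omega⟩ = DPM q)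
    (hB2odd : ∀ j : Fin t, B 2 ⟨2 * j.val + 1, by have := j.isLt; omega⟩ =
      DPM (z ⟨t - 1 - j.val, by have := j.isLt; omega⟩))
    (hB3 : ∀ c : Fin (2 * t),
      B 3 c = B 2 ⟨(c.val + 2 * t - 1) % (2 * t), Nat.mod_lt _ (by omega)⟩)
    (H : Matrix (Fin 4 × V ℓ) (Fin (2 * t) × V ℓ) (ZMod 2))
    (hH : ∀ (i : Fin 4) (a : V ℓ) (c : Fin (2 * t)) (b : V ℓ),
      H (i, a) (c, b) = B i c a b) :
    H * Hᵀ = 0 ∧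
    ∀ w : ℕ, ∀ hw : 1 ≤ w ∧ w ≤ 4,
      (Matrix.of fun (p : Fin w × V ℓ) (s : Fin (2 * t) × V ℓ) =>
          H (⟨p.1.val, lt_of_lt_of_le p.1.isLt hw.2⟩, p.2) s) *
        (Matrix.of fun (p : Fin w × V ℓ) (s : Fin (2 * t) × V ℓ) =>
          H (⟨p.1.val, lt_of_lt_of_le p.1.isLt hw.2⟩, p.2) s)ᵀ = 0 := by
  obtain ⟨n, rfl⟩ : ∃ n, t = n + 1 := ⟨t - 1, by omega⟩
  have hrev : ∀ j : Fin (n + 1),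
      B 2 ⟨2 * j.val + 1, j.two_mul_val_add_one_lt⟩ = DPM (z j.rev) := fun j => by
    rw [hB2odd]
    congr 2
    ext
    simp only [Fin.val_rev]
    omega
  have cross := sum_DPM_anchor_cross q z
  have rev_sum := sum_DPM_rev z
  have rev_shift_sum :
      ∑ j : Fin (n + 1), (DPM 0 + DPM (z (j - 1) + z (j - 1).rev)) = 0 :=
    ((Equiv.subRight 1).sum_comp fun j => DPM 0 + DPM (z j + z j.rev)).trans rev_sum
  have cross_one := cross (Equiv.subRight 1) (Equiv.refl _)
  have cross_rev := cross (Equiv.subRight 1) Fin.revPerm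
  have cross_shift_rev := cross ((Equiv.subRight 1).trans Fin.revPerm) (Equiv.refl _)
  have cross_shift_rev_rev := cross ((Equiv.subRight 1).trans Fin.revPerm) Fin.revPerm
  simp only [Equiv.subRight_apply, Equiv.refl_apply, Equiv.trans_apply, Fin.revPerm_apply]
    at cross_one cross_rev cross_shift_rev cross_shift_rev_rev
  have blocks : ∀ i k : Fin 4, ∑ c, B i c * (B k c)ᵀ = 0 := by
    intro i k
    rw [Fin.sum_univ_two_mul]
    fin_cases i <;> fin_cases k <;>
      simp only [Fin.zero_eta, Fin.mk_one, Fin.reduceFinMk, shift_even hB1, shift_odd hB1,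
        shift_even hB3, shift_odd hB3, hB0even, hB0odd, hB2even, hrev, DPM_mul_transpose,
        ZModModule.add_self, Finset.sum_const_zero, add_comm _ q, add_comm (z (Fin.rev _)),
        add_comm (DPM _) (DPM 0), cross_one, cross_rev, cross_shift_rev,
        cross_shift_rev_rev, rev_sum, rev_shift_sum]
  have horth : H * Hᵀ = 0 := by
    ext ⟨i, a⟩ ⟨k, b⟩
    have hentry := congrFun (congrFun (blocks i k) a) b
    simpa only [Matrix.sum_apply, Matrix.mul_apply, Matrix.transpose_apply, hH,
      Fintype.sum_prod_type, Matrix.zero_apply] using hentry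
  refine ⟨horth, fun w hw => ?_⟩
  ext p p'
  exact congrFun (congrFun horth (⟨p.1.val, lt_of_lt_of_le p.1.isLt hw.2⟩, p.2))
    (⟨p'.1.val, lt_of_lt_of_le p'.1.isLt hw.2⟩, p'.2)
end

section
/- Let u ≥ 2 and let m : Fin u → (V → 𝔽₂) be signatures, each of the same odd weight v, that are pairwise inequivalent under translation: for all i ≠ j and all s ∈ V, it is not the case that m i x = m j (x + s) for every x ∈ V (in particular the corresponding dyadic blocks are pairwise distinct). Let H : Matrix V (Fin u × V) 𝔽₂ be given by H a (j, b) = m j (a + b), and let C = {c : (Fin u × V) → 𝔽₂ | H.mulVec c = 0}. Then the number of codewords c ∈ C whose weight equals 2v is at least (u choose 2) · 2^(ℓ+1). -/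
lemma V_add_self {ℓ : ℕ} (x : V ℓ) : x + x = 0 :=
  funext fun i => CharTwo.add_self_eq_zero (x i)

lemma V_add_add_cancel_left {ℓ : ℕ} (a b s : V ℓ) : a + (b + (a + s)) = b + s := by
  rw [show a + (b + (a + s)) = (a + a) + (b + s) by abel, V_add_self, zero_add]

lemma V_add_add_cancel_right {ℓ : ℕ} (a b s : V ℓ) : b + (a + s) + s = a + b := by
  rw [show b + (a + s) + s = (s + s) + (a + b) by abel, V_add_self, zero_add]

/-- Dyadic blocks commute: the convolution of two signatures is symmetric. -/
lemma sum_mul_translate_comm {ℓ : ℕ} (f g : V ℓ → ZMod 2) (a s : V ℓ) :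
    ∑ b, f (a + b) * g (b + s) = ∑ b, g (a + b) * f (b + s) := by
  refine Fintype.sum_equiv (Equiv.addRight (a + s)) _ _ fun b => ?_
  simp only [Equiv.coe_addRight, V_add_add_cancel_left, V_add_add_cancel_right, mul_comm]

/-- A dyadic matrix whose signature has odd weight is an involution. -/
lemma sum_mul_translate_self {ℓ : ℕ} (f : V ℓ → ZMod 2)
    (hf : Odd (Finset.univ.filter fun x => f x ≠ 0).card) (a s : V ℓ) :
    ∑ b, f (a + b) * f (b + s) = if a = s then 1 else 0 := by
  split_ifs with h
  · subst h
    have hsq : ∀ z : ZMod 2, z * z = if z ≠ 0 then 1 else 0 := by decide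
    calc ∑ b, f (a + b) * f (b + a) = ∑ b, f b * f b :=
          Fintype.sum_equiv (Equiv.addLeft a) _ _ fun b => by simp [add_comm]
      _ = 1 := by
          simp only [hsq, Finset.sum_boole]
          exact ZMod.natCast_eq_one_iff_odd.mpr hf
  · have hne : a + s ≠ 0 := fun h0 =>
      h (add_right_cancel (h0.trans (V_add_self s).symm))
    refine Finset.sum_involution (fun b _ => b + (a + s)) (fun b _ => ?_) (fun b _ _ hb => ?_)
      (fun _ _ => Finset.mem_univ _) (fun b _ => ?_)
    · rw [V_add_add_cancel_left, V_add_add_cancel_right, mul_comm (f (b + s)), CharTwo.add_self_eq_zero]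
    · exact hne (by simpa using hb)
    · rw [add_assoc, V_add_self, add_zero]

/-- A signature of odd weight has no nontrivial period. -/
lemma translate_injective_of_odd {ℓ : ℕ} (f : V ℓ → ZMod 2)
    (hf : Odd (Finset.univ.filter fun x => f x ≠ 0).card) {s t : V ℓ}
    (h : ∀ x, f (x + s) = f (x + t)) : s = t := by
  by_contra hst
  have h₁ := sum_mul_translate_self f hf s s
  have h₂ := sum_mul_translate_self f hf s t
  simp only [h, if_true] at h₁
  rw [h₁, if_neg hst] at h₂
  exact one_ne_zero h₂

lemma card_translate_ne_zero {ℓ : ℕ} (f : V ℓ → ZMod 2) (s : V ℓ) :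
    (Finset.univ.filter fun x => f (x + s) ≠ 0).card =
      (Finset.univ.filter fun x => f x ≠ 0).card :=
  Finset.card_equiv (Equiv.addRight s) fun x => by simp

/-- A sum over all positions that vanishes off blocks `i` and `j` splits into two block sums. -/
lemma sum_eq_add_of_blocks {ι W : Type*} [Fintype ι] [Fintype W] {M : Type*} [AddCommMonoid M]
    {i j : ι} (h : i ≠ j) (F : ι × W → M) (hF : ∀ k, k ≠ i → k ≠ j → ∀ x, F (k, x) = 0) :
    ∑ p, F p = ∑ x, F (i, x) + ∑ x, F (j, x) := by
  rw [Fintype.sum_prod_type]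
  exact Fintype.sum_eq_add i j h fun k hk => Finset.sum_eq_zero fun x _ => hF k hk.1 hk.2 x

/-- The word equal to `f` on block `i`, to `g` on block `j`, and zero on all other blocks. -/
def pairWord {ι W : Type*} [DecidableEq ι] (i j : ι) (f g : W → ZMod 2) : ι × W → ZMod 2 :=
  fun p => if p.1 = i then f p.2 else if p.1 = j then g p.2 else 0

section PairWord

variable {ι W : Type*} [DecidableEq ι] {i j : ι} {f g : W → ZMod 2}

lemma pairWord_left (x : W) : pairWord i j f g (i, x) = f x := by simp [pairWord]

lemma pairWord_right (h : i ≠ j) (x : W) : pairWord i j f g (j, x) = g x := by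
  simp [pairWord, h.symm]

lemma pairWord_of_ne {k : ι} (hi : k ≠ i) (hj : k ≠ j) (x : W) :
    pairWord i j f g (k, x) = 0 := by
  simp [pairWord, hi, hj]

lemma card_pairWord_ne_zero [Fintype ι] [Fintype W] (h : i ≠ j) :
    (Finset.univ.filter fun p => pairWord i j f g p ≠ 0).card =
      (Finset.univ.filter fun x => f x ≠ 0).card + (Finset.univ.filter fun x => g x ≠ 0).card := by
  simp only [Finset.card_filter]
  rw [sum_eq_add_of_blocks h]
  · simp only [pairWord_left, pairWord_right h]
  · intro k hi hj x
    simp [pairWord_of_ne hi hj]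

end PairWord

/-- For `i < j` the translate by `s` of the word `(m j, m i)` on blocks `(i, j)`; for `j < i` the
translate by `s` of the word `(m i, m j)` on blocks `(i, j)`. -/
def lowWeightWord {ℓ u : ℕ} (m : Fin u → V ℓ → ZMod 2) (q : (Fin u × Fin u) × V ℓ) :
    Fin u × V ℓ → ZMod 2 :=
  pairWord q.1.1 q.1.2
    (fun x => m (if q.1.1 < q.1.2 then q.1.2 else q.1.1) (x + q.2))
    (fun x => m (if q.1.1 < q.1.2 then q.1.1 else q.1.2) (x + q.2))

section LowWeightWord

variable {ℓ u : ℕ} {m : Fin u → V ℓ → ZMod 2}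

lemma mulVec_lowWeightWord
    (hodd : ∀ j, Odd (Finset.univ.filter fun x => m j x ≠ 0).card)
    {H : Matrix (V ℓ) (Fin u × V ℓ) (ZMod 2)}
    (hH : ∀ (a : V ℓ) (j : Fin u) (b : V ℓ), H a (j, b) = m j (a + b))
    {i j : Fin u} (hij : i ≠ j) (s : V ℓ) :
    H.mulVec (lowWeightWord m ((i, j), s)) = 0 := by
  funext a
  rw [Matrix.mulVec, dotProduct, sum_eq_add_of_blocks hij]
  · simp only [lowWeightWord, pairWord_left, pairWord_right hij, hH, Pi.zero_apply]
    split_ifs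
    · rw [sum_mul_translate_comm, CharTwo.add_self_eq_zero]
    · rw [sum_mul_translate_self _ (hodd i), sum_mul_translate_self _ (hodd j),
        CharTwo.add_self_eq_zero]
  · intro k hi hj x
    simp [lowWeightWord, pairWord_of_ne hi hj]

lemma card_lowWeightWord_ne_zero {v : ℕ}
    (hw : ∀ j, (Finset.univ.filter fun x => m j x ≠ 0).card = v)
    {i j : Fin u} (hij : i ≠ j) (s : V ℓ) :
    (Finset.univ.filter fun p => lowWeightWord m ((i, j), s) p ≠ 0).card = 2 * v := by
  simp only [lowWeightWord]
  rw [card_pairWord_ne_zero hij, card_translate_ne_zero, card_translate_ne_zero, hw, hw, two_mul]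

/-- The blocks on which a low-weight word is nonzero are exactly its two index blocks. -/
lemma exists_lowWeightWord_ne_zero_iff
    (hodd : ∀ j, Odd (Finset.univ.filter fun x => m j x ≠ 0).card)
    {i j : Fin u} (hij : i ≠ j) (s : V ℓ) (k : Fin u) :
    (∃ x, lowWeightWord m ((i, j), s) (k, x) ≠ 0) ↔ k = i ∨ k = j := by
  have hex : ∀ n, ∃ x, m n (x + s) ≠ 0 := fun n => by
    have hpos := (hodd n).pos
    rw [← card_translate_ne_zero (m n) s, Finset.card_pos] at hpos
    obtain ⟨x, hx⟩ := hpos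
    exact ⟨x, (Finset.mem_filter.mp hx).2⟩
  constructor
  · rintro ⟨x, hx⟩
    by_contra! hk
    exact hx (pairWord_of_ne hk.1 hk.2 x)
  · rintro (rfl | rfl)
    · simpa only [lowWeightWord, pairWord_left] using hex _
    · simpa only [lowWeightWord, pairWord_right hij] using hex _

lemma lowWeightWord_injOn
    (hodd : ∀ j, Odd (Finset.univ.filter fun x => m j x ≠ 0).card)
    (hdist : ∀ i j : Fin u, i ≠ j → ∀ s : V ℓ, ¬ (∀ x, m i x = m j (x + s))) :
    Set.InjOn (lowWeightWord m)
      ((Finset.univ : Finset (Fin u)).offDiag ×ˢ (Finset.univ : Finset (V ℓ)) :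
        Finset ((Fin u × Fin u) × V ℓ)) := by
  have hdist' : ∀ i j : Fin u, i ≠ j → ∀ s t : V ℓ, ¬ (∀ x, m i (x + s) = m j (x + t)) :=
    fun i j hij s t h => hdist i j hij (s + t) fun x => by
      have hx := h (x + s)
      rwa [add_assoc, V_add_self, add_zero, add_assoc] at hx
  rintro ⟨⟨i, j⟩, s⟩ hq ⟨⟨i', j'⟩, t⟩ hq' heq
  have hij : i ≠ j := by simpa using hq
  have hij' : i' ≠ j' := by simpa using hq'
  have hblocks : ∀ k, (k = i ∨ k = j) ↔ (k = i' ∨ k = j') := fun k => by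
    rw [← exists_lowWeightWord_ne_zero_iff hodd hij s, heq,
      exists_lowWeightWord_ne_zero_iff hodd hij' t]
  have hval : ∀ x, lowWeightWord m ((i, j), s) (i, x) = lowWeightWord m ((i', j'), t) (i, x) :=
    fun x => by rw [heq]
  have hcases : (i' = i ∧ j' = j) ∨ (i' = j ∧ j' = i) := by
    have h₁ := (hblocks i').mpr (Or.inl rfl)
    have h₂ := (hblocks j').mpr (Or.inr rfl)
    grind
  rcases hcases with ⟨rfl, rfl⟩ | ⟨rfl, rfl⟩
  · simp only [lowWeightWord, pairWord_left] at hval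
    rw [translate_injective_of_odd _ (hodd _) hval]
  · simp only [lowWeightWord, pairWord_left, pairWord_right hij'] at hval
    refine absurd hval (hdist' _ _ ?_ s t)
    rcases lt_or_gt_of_ne hij with h | h
    · simpa [h, h.not_gt] using hij'
    · simpa [h, h.not_gt] using hij

end LowWeightWord

/-- If the `u ≥ 2` dyadic blocks of `H` have pairwise translation-inequivalent signatures
of common odd weight `v`, the code with parity-check matrix `H` contains at least
`(u choose 2) · 2^(ℓ+1)` codewords of weight `2v`. -/
theorem constructionB_lowWeight_codewords (ℓ u v : ℕ) (hu : 2 ≤ u)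
    (m : Fin u → V ℓ → ZMod 2)
    (hw : ∀ j : Fin u, (Finset.univ.filter fun x => m j x ≠ 0).card = v)
    (hv : Odd v)
    (hdist : ∀ i j : Fin u, i ≠ j → ∀ s : V ℓ, ¬ (∀ x, m i x = m j (x + s)))
    (H : Matrix (V ℓ) (Fin u × V ℓ) (ZMod 2))
    (hH : ∀ (a : V ℓ) (j : Fin u) (b : V ℓ), H a (j, b) = m j (a + b)) :
    u.choose 2 * 2 ^ (ℓ + 1) ≤
      (Finset.univ.filter fun c : (Fin u × V ℓ) → ZMod 2 =>
        H.mulVec c = 0 ∧ (Finset.univ.filter fun p => c p ≠ 0).card = 2 * v).card := by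
  have hodd : ∀ j, Odd (Finset.univ.filter fun x => m j x ≠ 0).card := fun j => by rwa [hw j]
  have hcard : ((Finset.univ : Finset (Fin u)).offDiag ×ˢ (Finset.univ : Finset (V ℓ))).card =
      u.choose 2 * 2 ^ (ℓ + 1) := by
    have htwo : u * u - u = u.choose 2 * 2 := by
      rw [Nat.choose_two_right, Nat.div_mul_cancel (Nat.even_mul_pred_self u).two_dvd,
        Nat.mul_sub_one]
    rw [Finset.card_product, Finset.offDiag_card, Finset.card_univ, Finset.card_univ,
      Fintype.card_fin, htwo, Fintype.card_fun, ZMod.card, Fintype.card_fin, pow_succ']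
    ring
  rw [← hcard]
  refine Finset.card_le_card_of_injOn (lowWeightWord m) ?_ (lowWeightWord_injOn hodd hdist)
  rintro ⟨⟨i, j⟩, s⟩ hq
  have hij : i ≠ j := by simpa using hq
  rw [Finset.mem_coe, Finset.mem_filter]
  exact ⟨Finset.mem_univ _, mulVec_lowWeightWord hodd hH hij s,
    card_lowWeightWord_ne_zero hw hij s⟩
end

section
/- Let u be an even natural number and let m : Fin u → (V → 𝔽₂) be signatures each of odd weight, and let H : Matrix V (Fin u × V) 𝔽₂ be given by H a (j, b) = m j (a + b). Then H * Hᵀ = 0; consequently every vector in the 𝔽₂-linear span of the rows of H satisfies H.mulVec c = 0, i.e., the code with parity-check matrix H is dual-containing (C⊥ ⊆ C). -/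
open Matrix

/-- The autocorrelation of an `𝔽₂`-valued signature on `V ℓ` vanishes off the diagonal. -/
theorem sum_mul_shift_eq_zero {ℓ : ℕ} (f : V ℓ → ZMod 2) {a a' : V ℓ} (h : a ≠ a') :
    ∑ b, f (a + b) * f (a' + b) = 0 := by
  have hself (x : V ℓ) : x + x = 0 := ZModModule.add_self x
  refine Finset.sum_involution (fun b _ => b + (a + a')) ?_ ?_ ?_ ?_
  · intro b _
    have h₁ : a + (b + (a + a')) = a' + b := by
      linear_combination hself a
    have h₂ : a' + (b + (a + a')) = a + b := by
      linear_combination hself a'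
    rw [h₁, h₂, mul_comm (f (a' + b))]
    exact CharTwo.add_self_eq_zero _
  · intro b _ _ hb
    exact h (add_right_cancel ((add_eq_left.mp hb).trans (hself a').symm))
  · intro b _
    exact Finset.mem_univ _
  · intro b _
    rw [add_assoc, hself, add_zero]

/-- The sum of squares of an `𝔽₂`-valued function is the parity of its weight. -/
theorem sum_mul_self_eq_weight {α : Type*} [Fintype α] (f : α → ZMod 2) :
    ∑ x, f x * f x = ((Finset.univ.filter fun x => f x ≠ 0).card : ZMod 2) := by
  have hsq : ∀ z : ZMod 2, z * z = if z ≠ 0 then 1 else 0 := by decide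
  simp_rw [hsq, Finset.sum_boole]

/-- For an even number `u` of dyadic blocks with odd-weight signatures, the horizontal
concatenation `H` satisfies `H * Hᵀ = 0`, so the code with parity-check matrix `H` is
dual-containing: every vector in the row span of `H` lies in `ker H`. -/
theorem constructionB_dualContaining (ℓ u : ℕ) (hu : Even u)
    (m : Fin u → V ℓ → ZMod 2)
    (hodd : ∀ j : Fin u, Odd (Finset.univ.filter fun x => m j x ≠ 0).card)
    (H : Matrix (V ℓ) (Fin u × V ℓ) (ZMod 2))
    (hH : ∀ (a : V ℓ) (j : Fin u) (b : V ℓ), H a (j, b) = m j (a + b)) :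
    H * Hᵀ = 0 ∧
    ∀ c ∈ Submodule.span (ZMod 2) (Set.range fun a => H a), H.mulVec c = 0 := by
  have hmul : H * Hᵀ = 0 := by
    ext a a'
    simp only [Matrix.mul_apply, Matrix.transpose_apply, Matrix.zero_apply,
      Fintype.sum_prod_type, hH]
    by_cases h : a = a'
    · subst h
      have hblock (j : Fin u) : ∑ b, m j (a + b) * m j (a + b) = 1 := by
        refine (Equiv.sum_comp (Equiv.addLeft a) fun b => m j b * m j b).trans ?_
        rw [sum_mul_self_eq_weight]
        exact ZMod.natCast_eq_one_iff_odd.mpr (hodd j)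
      simpa [hblock] using ZMod.natCast_eq_zero_iff_even.mpr hu
    · exact Finset.sum_eq_zero fun j _ => sum_mul_shift_eq_zero (m j) h
  refine ⟨hmul, fun c hc => ?_⟩
  have hle : Submodule.span (ZMod 2) (Set.range fun a => H a) ≤
      LinearMap.ker H.mulVecLin := by
    rw [Submodule.span_le]
    rintro _ ⟨a, rfl⟩
    ext a'
    exact congrFun (congrFun hmul a') a
  exact hle hc
end

section
/- Let u ≥ 2 and let m : Fin u → (V → 𝔽₂) be signatures each of the same odd weight v (with v ≥ 1), and let H : Matrix V (Fin u × V) 𝔽₂ be given by H a (j, b) = m j (a + b). Then there exists a nonzero vector c : (Fin u × V) → 𝔽₂ with H.mulVec c = 0 whose weight equals 2v. Consequently, the minimum distance of the code with parity-check matrix H is at most 2v. -/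
/-- Dyadic convolution of functions is commutative. -/
theorem sum_dyadic_mul_comm {ℓ : ℕ} (f g : V ℓ → ZMod 2) (a : V ℓ) :
    ∑ b, f (a + b) * g b = ∑ b, g (a + b) * f b := by
  refine Fintype.sum_equiv (Equiv.addLeft a) _ _ fun b => ?_
  have h : a + (a + b) = b := funext fun k => CharTwo.add_cancel_left (a k) (b k)
  rw [Equiv.coe_addLeft, h, mul_comm]

/-- The vector with `f` in block `i`, `g` in block `j` and zero elsewhere. -/
def twoBlockVector {ι α : Type*} [DecidableEq ι] (i j : ι) (f g : α → ZMod 2) :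
    ι × α → ZMod 2 :=
  fun p => if p.1 = i then f p.2 else if p.1 = j then g p.2 else 0

theorem sum_twoBlockVector {ι α M : Type*} [DecidableEq ι] [Fintype ι] [Fintype α]
    [AddCommMonoid M] {i j : ι} (hij : i ≠ j) (f g : α → ZMod 2) (F : ι → α → ZMod 2 → M)
    (hF : ∀ k x, F k x 0 = 0) :
    ∑ p : ι × α, F p.1 p.2 (twoBlockVector i j f g p) =
      ∑ x, F i x (f x) + ∑ x, F j x (g x) := by
  rw [Fintype.sum_prod_type, Fintype.sum_eq_add i j hij]
  · simp [twoBlockVector, hij.symm]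
  · rintro k ⟨hi, hj⟩
    simp [twoBlockVector, hi, hj, hF]

/-- If `u ≥ 2` dyadic blocks all have signatures of common odd weight `v ≥ 1`, the code
with parity-check matrix `H` has a nonzero codeword of weight `2v`; hence its minimum
distance is at most `2v`. -/
theorem constructionB_minDist_le (ℓ u v : ℕ) (hu : 2 ≤ u) (hv1 : 1 ≤ v) (hv : Odd v)
    (m : Fin u → V ℓ → ZMod 2)
    (hw : ∀ j : Fin u, (Finset.univ.filter fun x => m j x ≠ 0).card = v)
    (H : Matrix (V ℓ) (Fin u × V ℓ) (ZMod 2))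
    (hH : ∀ (a : V ℓ) (j : Fin u) (b : V ℓ), H a (j, b) = m j (a + b)) :
    ∃ c : (Fin u × V ℓ) → ZMod 2, c ≠ 0 ∧ H.mulVec c = 0 ∧
      (Finset.univ.filter fun p => c p ≠ 0).card = 2 * v := by
  let i : Fin u := ⟨0, by omega⟩
  let j : Fin u := ⟨1, by omega⟩
  have hij : i ≠ j := by simp [i, j]
  have hcard : (Finset.univ.filter fun p => twoBlockVector i j (m j) (m i) p ≠ 0).card
      = 2 * v := by
    rw [Finset.card_filter, sum_twoBlockVector hij _ _ (fun _ _ y => if y ≠ 0 then 1 else 0)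
      (by simp), ← Finset.card_filter, ← Finset.card_filter, hw, hw, two_mul]
  refine ⟨twoBlockVector i j (m j) (m i), fun h => ?_, funext fun a => ?_, hcard⟩
  · simp only [h, Pi.zero_apply, ne_eq, not_true_eq_false, Finset.filter_false,
      Finset.card_empty] at hcard
    omega
  · have h := sum_twoBlockVector hij (m j) (m i) (fun k b y => H a (k, b) * y) (by simp)
    simp only [hH, sum_dyadic_mul_comm (m i) (m j), CharTwo.add_self_eq_zero] at h
    simpa only [Matrix.mulVec, dotProduct, hH, Pi.zero_apply] using h
end

section
/- Let u ≥ 2 and let m : Fin u → (V → 𝔽₂) be signatures each of odd weight, let M_j denote the dyadic matrix with signature m j, and let H : Matrix V (Fin u × V) 𝔽₂ be given by H a (j, b) = m j (a + b). Define G : Matrix (Fin (u−1) × V) (Fin u × V) 𝔽₂ in systematic form by: for block columns j < u−1, the (i, j) block of G is the identity matrix if i = j and the zero matrix otherwise, while the (i, u−1) block of G equals M_{u−1} * M_i. Then the code {c : (Fin u × V) → 𝔽₂ | H.mulVec c = 0} equals the 𝔽₂-linear span of the rows of G; that is, G is a generator matrix of the code with parity-check matrix H. -/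
open Matrix

section Dyadic

variable {ℓ : ℕ}

theorem add_translate_left (a b x : V ℓ) : a + (x + (a + b)) = x + b := by
  rw [show a + (x + (a + b)) = (a + a) + (x + b) by abel, ZModModule.add_self, zero_add]

theorem add_translate_right (a b x : V ℓ) : x + (a + b) + b = a + x := by
  rw [show x + (a + b) + b = (a + x) + (b + b) by abel, ZModModule.add_self, add_zero]

/-- The dyadic matrix with signature `f`. -/
def dyadic (f : V ℓ → ZMod 2) : Matrix (V ℓ) (V ℓ) (ZMod 2) := Matrix.of fun a b => f (a + b)

theorem dyadic_transpose (f : V ℓ → ZMod 2) : (dyadic f)ᵀ = dyadic f := by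
  ext a b
  simp [dyadic, add_comm]

theorem dyadic_mul_comm (f g : V ℓ → ZMod 2) : dyadic f * dyadic g = dyadic g * dyadic f := by
  ext a b
  simp only [Matrix.mul_apply, dyadic, Matrix.of_apply]
  refine Fintype.sum_equiv (Equiv.addRight (a + b)) _ _ fun x => ?_
  rw [Equiv.coe_addRight, add_translate_left, add_translate_right, mul_comm]

theorem sum_eq_one_of_odd_weight_s15 (f : V ℓ → ZMod 2)
    (hf : Odd (Finset.univ.filter fun x => f x ≠ 0).card) : ∑ x, f x = 1 := by
  have hval : ∀ z : ZMod 2, z = if z ≠ 0 then 1 else 0 := by decide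
  rw [Finset.sum_congr rfl fun x _ => hval (f x), Finset.sum_boole]
  exact ZMod.natCast_eq_one_iff_odd.mpr hf

theorem dyadic_mul_self_s15 (f : V ℓ → ZMod 2)
    (hf : Odd (Finset.univ.filter fun x => f x ≠ 0).card) : dyadic f * dyadic f = 1 := by
  ext a b
  simp only [Matrix.mul_apply, dyadic, Matrix.of_apply]
  by_cases hab : a = b
  · subst hab
    have hsq : ∀ z : ZMod 2, z * z = z := by decide
    rw [Matrix.one_apply_eq, ← sum_eq_one_of_odd_weight_s15 f hf]
    refine Fintype.sum_equiv (Equiv.addLeft a) _ _ fun x => ?_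
    rw [add_comm x a, hsq, Equiv.coe_addLeft]
  · rw [Matrix.one_apply_ne hab]
    refine Finset.sum_involution (fun x _ => x + (a + b)) ?_ ?_ (by simp) ?_
    · intro x _
      rw [add_translate_left, add_translate_right, mul_comm (f (x + b)), CharTwo.add_self_eq_zero]
    · intro x _ _ hx
      rw [add_eq_left, add_eq_zero_iff_eq_neg, ZModModule.neg_eq_self] at hx
      exact hab hx
    · intro x _
      rw [add_assoc, ZModModule.add_self, add_zero]

/-- Solving the parity-check equation for the last block, using that an odd-weight dyadic matrix
is its own inverse. -/
theorem sum_dyadic_mulVec_eq_zero_iff {n : ℕ} (m : Fin (n + 1) → V ℓ → ZMod 2)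
    (hodd : Odd (Finset.univ.filter fun x => m (Fin.last n) x ≠ 0).card)
    (c : Fin (n + 1) → V ℓ → ZMod 2) :
    ∑ j, dyadic (m j) *ᵥ c j = 0 ↔
      ∑ i : Fin n, c i.castSucc ᵥ* (dyadic (m (Fin.last n)) * dyadic (m i.castSucc)) =
        c (Fin.last n) := by
  have hrow (i : Fin n) :
      c i.castSucc ᵥ* (dyadic (m (Fin.last n)) * dyadic (m i.castSucc)) =
        dyadic (m (Fin.last n)) *ᵥ (dyadic (m i.castSucc) *ᵥ c i.castSucc) := by
    rw [← Matrix.mulVec_transpose, Matrix.transpose_mul, dyadic_transpose, dyadic_transpose,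
      dyadic_mul_comm, Matrix.mulVec_mulVec]
  simp only [hrow]
  rw [← Matrix.mulVec_sum, Fin.sum_univ_castSucc, CharTwo.add_eq_zero]
  constructor
  · intro h
    rw [h, Matrix.mulVec_mulVec, dyadic_mul_self_s15 _ hodd, Matrix.one_mulVec]
  · intro h
    rw [← h, Matrix.mulVec_mulVec, dyadic_mul_self_s15 _ hodd, Matrix.one_mulVec]

end Dyadic

/-- The systematic-form matrix `G = [I | (M_{u-1} M_i)ᵀ]` (with blocks `M_{u-1} * M_i`
in the last block column) is a generator matrix of the code with parity-check matrix
`H = [M_0 | ⋯ | M_{u-1}]`, when all signatures have odd weight. -/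
theorem constructionB_generatorMatrix (ℓ u : ℕ) (hu : 2 ≤ u)
    (m : Fin u → V ℓ → ZMod 2)
    (hodd : ∀ j : Fin u, Odd (Finset.univ.filter fun x => m j x ≠ 0).card)
    (H : Matrix (V ℓ) (Fin u × V ℓ) (ZMod 2))
    (hH : ∀ (a : V ℓ) (j : Fin u) (b : V ℓ), H a (j, b) = m j (a + b))
    (M : Fin u → Matrix (V ℓ) (V ℓ) (ZMod 2))
    (hM : ∀ (j : Fin u) (a b : V ℓ), M j a b = m j (a + b))
    (G : Matrix (Fin (u - 1) × V ℓ) (Fin u × V ℓ) (ZMod 2))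
    (hG : ∀ (i : Fin (u - 1)) (a : V ℓ) (j : Fin u) (b : V ℓ),
      G (i, a) (j, b) =
        if j.val < u - 1 then (if i.val = j.val ∧ a = b then 1 else 0)
        else (M ⟨u - 1, by omega⟩ * M ⟨i.val, by have := i.isLt; omega⟩) a b) :
    ∀ c : (Fin u × V ℓ) → ZMod 2,
      H.mulVec c = 0 ↔ c ∈ Submodule.span (ZMod 2) (Set.range fun p => G p) := by
  obtain ⟨n, rfl⟩ : ∃ n, u = n + 1 := ⟨u - 1, by omega⟩
  change Matrix (Fin n × V ℓ) (Fin (n + 1) × V ℓ) (ZMod 2) at G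
  intro c
  have hM' : M = fun j => dyadic (m j) := by
    ext j a b
    exact hM j a b
  subst hM'
  have hH' : H *ᵥ c = ∑ j, dyadic (m j) *ᵥ fun b => c (j, b) := by
    ext a
    simp [Matrix.mulVec, dotProduct, Fintype.sum_prod_type, hH, dyadic, Finset.sum_apply]
  have hGinit (w : Fin n × V ℓ → ZMod 2) (j : Fin n) (b : V ℓ) :
      (∑ p, w p • G p) (j.castSucc, b) = w (j, b) := by
    rw [Finset.sum_apply, Finset.sum_eq_single (j, b)]
    · rw [Pi.smul_apply, hG j b j.castSucc b]
      simp
    · rintro ⟨i, a⟩ - hne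
      rw [Pi.smul_apply, hG i a j.castSucc b]
      have hcond : ¬ (i.val = j.val ∧ a = b) := fun h =>
        hne (Prod.ext (Fin.ext h.1) h.2)
      simp [hcond]
    · simp
  have hGlast (w : Fin n × V ℓ → ZMod 2) (b : V ℓ) :
      (∑ p, w p • G p) (Fin.last n, b) =
        (∑ i : Fin n, (fun a => w (i, a)) ᵥ*
          (dyadic (m (Fin.last n)) * dyadic (m i.castSucc))) b := by
    rw [Finset.sum_apply, Finset.sum_apply, Fintype.sum_prod_type]
    refine Finset.sum_congr rfl fun i _ => Finset.sum_congr rfl fun a _ => ?_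
    rw [Pi.smul_apply, hG i a (Fin.last n) b, if_neg (by simp)]
    rfl
  rw [hH', sum_dyadic_mulVec_eq_zero_iff m (hodd _) fun j b => c (j, b),
    Submodule.mem_span_range_iff_exists_fun]
  constructor
  · intro h
    refine ⟨fun p => c (p.1.castSucc, p.2), funext ?_⟩
    rintro ⟨j, b⟩
    induction j using Fin.lastCases with
    | last => exact (hGlast _ b).trans (congrFun h b)
    | cast j => exact hGinit _ j b
  · rintro ⟨w, hw⟩
    have hc (i : Fin n) (a : V ℓ) : c (i.castSucc, a) = w (i, a) := by
      rw [← hw]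
      exact hGinit w i a
    simp only [hc]
    ext b
    rw [← hw]
    exact (hGlast w b).symm
end

section
/- Let ρ : Fin 2 → Fin 2 → V and let M : Matrix (Fin 2 × V) (Fin 2 × V) 𝔽₂ be the 2 × 2 array of DPMs with M (i, a) (j, b) = 1 if a + b = ρ i j and 0 otherwise. Then every cycle in the Tanner graph of M has the same length: for any two cycles c₁ and c₂ in the Tanner graph of M, the length of c₁ equals the length of c₂. -/
/-- The Tanner graph of a binary matrix `H`: `Sum.inl r` and `Sum.inr c` are adjacent
iff `H r c = 1`, and there are no other adjacencies. -/
def tanner {R C : Type*} (H : Matrix R C (ZMod 2)) : SimpleGraph (R ⊕ C) :=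
  SimpleGraph.fromRel fun x y =>
    match x, y with
    | Sum.inl r, Sum.inr c => H r c = 1
    | _, _ => False

section TannerGraph

variable {R C : Type*} (H : Matrix R C (ZMod 2))

@[simp] lemma tanner_adj_inl_inr (r : R) (c : C) :
    (tanner H).Adj (Sum.inl r) (Sum.inr c) ↔ H r c = 1 := by
  simp [tanner]

@[simp] lemma tanner_adj_inr_inl (r : R) (c : C) :
    (tanner H).Adj (Sum.inr c) (Sum.inl r) ↔ H r c = 1 := by
  simp [tanner]

@[simp] lemma not_tanner_adj_inl_inl (r r' : R) :
    ¬ (tanner H).Adj (Sum.inl r) (Sum.inl r') := by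
  simp [tanner]

@[simp] lemma not_tanner_adj_inr_inr (c c' : C) :
    ¬ (tanner H).Adj (Sum.inr c) (Sum.inr c') := by
  simp [tanner]

variable {H}

lemma isLeft_ne_of_tanner_adj {x y : R ⊕ C} (h : (tanner H).Adj x y) :
    x.isLeft ≠ y.isLeft := by
  rcases x with r | c <;> rcases y with r' | c' <;> simp_all

end TannerGraph

section DyadicArray

variable {ℓ : ℕ}

lemma V.two_eq_zero : (2 : V ℓ) = 0 := by
  funext i
  exact CharTwo.two_eq_zero

/-- The row or column block that contains a vertex. -/
def blockIndex (x : (Fin 2 × V ℓ) ⊕ (Fin 2 × V ℓ)) : Fin 2 :=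
  x.elim Prod.fst Prod.fst

/-- Translate a vertex by `s` within its block. -/
def blockShift (s : V ℓ) : (Fin 2 × V ℓ) ⊕ (Fin 2 × V ℓ) → (Fin 2 × V ℓ) ⊕ (Fin 2 × V ℓ) :=
  Sum.map (Prod.map id (· + s)) (Prod.map id (· + s))

lemma blockIndex_blockShift (s : V ℓ) (x : (Fin 2 × V ℓ) ⊕ (Fin 2 × V ℓ)) :
    blockIndex (blockShift s x) = blockIndex x := by
  rcases x with x | x <;> rfl

lemma blockShift_eq_self_iff {s : V ℓ} {x : (Fin 2 × V ℓ) ⊕ (Fin 2 × V ℓ)} :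
    blockShift s x = x ↔ s = 0 := by
  rcases x with ⟨i, a⟩ | ⟨i, a⟩ <;> simp [blockShift]

lemma blockShift_blockShift (s : V ℓ) (x : (Fin 2 × V ℓ) ⊕ (Fin 2 × V ℓ)) :
    blockShift s (blockShift s x) = x := by
  have h (a : V ℓ) : a + s + s = a := by linear_combination s * V.two_eq_zero (ℓ := ℓ)
  rcases x with ⟨i, a⟩ | ⟨i, a⟩ <;> simp [blockShift, h]

variable {ρ : Fin 2 → Fin 2 → V ℓ} {M : Matrix (Fin 2 × V ℓ) (Fin 2 × V ℓ) (ZMod 2)}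

lemma blockIndex_ne_of_tanner_adj
    (hM : ∀ i a j b, M (i, a) (j, b) = if a + b = ρ i j then 1 else 0)
    {x y z : (Fin 2 × V ℓ) ⊕ (Fin 2 × V ℓ)}
    (hxy : (tanner M).Adj x y) (hyz : (tanner M).Adj y z) (hxz : x ≠ z) :
    blockIndex x ≠ blockIndex z := by
  rcases x with ⟨i, a⟩ | ⟨i, a⟩ <;> rcases y with ⟨j, b⟩ | ⟨j, b⟩ <;>
    rcases z with ⟨k, c⟩ | ⟨k, c⟩ <;> simp [hM] at hxy hyz <;> rintro (rfl : i = k) <;>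
    refine hxz ?_ <;> have hac : a = c := by linear_combination hxy - hyz
  all_goals rw [hac]

lemma eq_blockShift_of_tanner_adj
    (hM : ∀ i a j b, M (i, a) (j, b) = if a + b = ρ i j then 1 else 0)
    {x₀ x₁ x₂ x₃ x₄ : (Fin 2 × V ℓ) ⊕ (Fin 2 × V ℓ)}
    (h₀₁ : (tanner M).Adj x₀ x₁) (h₁₂ : (tanner M).Adj x₁ x₂)
    (h₂₃ : (tanner M).Adj x₂ x₃) (h₃₄ : (tanner M).Adj x₃ x₄)
    (h₀₂ : x₀ ≠ x₂) (h₁₃ : x₁ ≠ x₃) (h₂₄ : x₂ ≠ x₄) :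
    x₄ = blockShift (ρ 0 0 + ρ 0 1 + ρ 1 0 + ρ 1 1) x₀ := by
  have hb₀₂ := blockIndex_ne_of_tanner_adj hM h₀₁ h₁₂ h₀₂
  have hb₁₃ := blockIndex_ne_of_tanner_adj hM h₁₂ h₂₃ h₁₃
  have hb₂₄ := blockIndex_ne_of_tanner_adj hM h₂₃ h₃₄ h₂₄
  have fin_two {i k : Fin 2} (h : i ≠ k) : k = 1 - i := by omega
  have hsum (i j : Fin 2) : ρ 0 0 + ρ 0 1 + ρ 1 0 + ρ 1 1
      = ρ i j + ρ (1 - i) j + ρ (1 - i) (1 - j) + ρ i (1 - j) := by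
    fin_cases i <;> fin_cases j <;> simp <;> ring
  have h2 := V.two_eq_zero (ℓ := ℓ)
  rcases x₀ with ⟨i₀, a₀⟩ | ⟨i₀, a₀⟩ <;> rcases x₁ with ⟨i₁, a₁⟩ | ⟨i₁, a₁⟩ <;>
    simp [hM] at h₀₁ <;> rcases x₂ with ⟨i₂, a₂⟩ | ⟨i₂, a₂⟩ <;> simp [hM] at h₁₂ <;>
    rcases x₃ with ⟨i₃, a₃⟩ | ⟨i₃, a₃⟩ <;> simp [hM] at h₂₃ <;>
    rcases x₄ with ⟨i₄, a₄⟩ | ⟨i₄, a₄⟩ <;> simp [hM] at h₃₄ <;>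
    simp only [blockIndex, Sum.elim_inl, Sum.elim_inr] at hb₀₂ hb₁₃ hb₂₄ <;>
    obtain rfl := fin_two hb₀₂ <;> obtain rfl := fin_two hb₁₃ <;> obtain rfl := fin_two hb₂₄ <;>
    simp only [sub_sub_cancel] at h₃₄ <;>
    simp only [blockShift, Sum.map_inl, Sum.map_inr, Prod.map_apply, id, sub_sub_cancel,
      Sum.inl.injEq, Sum.inr.injEq, Prod.mk.injEq, true_and]
  · rw [hsum i₀ i₁, ← h₀₁, ← h₁₂, ← h₂₃, ← h₃₄]
    linear_combination -(a₀ + a₁ + a₂ + a₃) * h2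
  · rw [hsum i₁ i₀, ← h₀₁, ← h₁₂, ← h₂₃, ← h₃₄]
    linear_combination -(a₀ + a₁ + a₂ + a₃) * h2

lemma length_eq_of_isCycle
    (hM : ∀ i a j b, M (i, a) (j, b) = if a + b = ρ i j then 1 else 0)
    {v : (Fin 2 × V ℓ) ⊕ (Fin 2 × V ℓ)} {c : (tanner M).Walk v v} (hc : c.IsCycle) :
    c.length = if ρ 0 0 + ρ 0 1 + ρ 1 0 + ρ 1 1 = 0 then 4 else 8 := by
  have hadj {n : ℕ} (hn : n < c.length) : (tanner M).Adj (c.getVert n) (c.getVert (n + 1)) :=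
    c.adj_getVert_succ hn
  have hne {n : ℕ} (hn : n + 2 ≤ c.length) : c.getVert n ≠ c.getVert (n + 2) :=
    hc.getVert_sub_one_ne_getVert_add_one (i := n + 1) (by omega)
  have hshift {n : ℕ} (hn : n + 4 ≤ c.length) : c.getVert (n + 4)
      = blockShift (ρ 0 0 + ρ 0 1 + ρ 1 0 + ρ 1 1) (c.getVert n) :=
    eq_blockShift_of_tanner_adj hM (hadj (by omega)) (hadj (by omega)) (hadj (by omega))
      (hadj (by omega)) (hne (by omega)) (hne (by omega)) (hne (by omega))
  have hside {n : ℕ} (hn : n ≤ c.length) :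
      (c.getVert n).isLeft = v.isLeft ↔ Even n := by
    induction n with
    | zero => simp
    | succ n ih =>
      have hlr := isLeft_ne_of_tanner_adj (hadj (n := n) (by omega))
      rw [Nat.even_add_one, ← ih (by omega)]
      grind
  have heven : Even c.length := (hside le_rfl).1 (by simp)
  have hthree := hc.three_le_length
  have hfour : 4 ≤ c.length := by grind
  have hv₄ := hshift (n := 0) (by omega)
  simp only [Nat.zero_add, c.getVert_zero] at hv₄
  have hclosed {n : ℕ} (hn : n ≤ c.length) (hpos : n ≠ 0) (h : c.getVert n = v) :
      c.length = n := by
    have := (hc.getVert_endpoint_iff hn).1 h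
    omega
  split_ifs with hs
  · exact hclosed hfour (by omega) (by rw [hv₄, blockShift_eq_self_iff, hs])
  · have hlen₄ : c.length ≠ 4 := by
      intro h
      rw [← h, c.getVert_length, eq_comm, blockShift_eq_self_iff] at hv₄
      exact hs hv₄
    have hsix : 6 ≤ c.length := by grind
    have hlen₆ : c.length ≠ 6 := by
      intro h
      have hv₆ := hshift (n := 2) hsix
      have hb := blockIndex_ne_of_tanner_adj hM (hadj (n := 0) (by omega))
        (hadj (by omega)) (hne (by omega))
      rw [← blockIndex_blockShift (ρ 0 0 + ρ 0 1 + ρ 1 0 + ρ 1 1) (c.getVert (0 + 1 + 1)),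
        ← hv₆] at hb
      apply hb
      rw [show 2 + 4 = c.length from h.symm, c.getVert_length, c.getVert_zero]
    have height : 8 ≤ c.length := by grind
    exact hclosed height (by omega) (by rw [hshift (n := 4) height, hv₄, blockShift_blockShift])

end DyadicArray

/-- All cycles in the Tanner graph of a `2 × 2` array of dyadic permutation matrices
have the same length. -/
theorem dpmArray2x2_cycles_same_length (ℓ : ℕ)
    (ρ : Fin 2 → Fin 2 → V ℓ)
    (M : Matrix (Fin 2 × V ℓ) (Fin 2 × V ℓ) (ZMod 2))
    (hM : ∀ (i : Fin 2) (a : V ℓ) (j : Fin 2) (b : V ℓ),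
      M (i, a) (j, b) = if a + b = ρ i j then 1 else 0)
    (v₁ v₂ : (Fin 2 × V ℓ) ⊕ (Fin 2 × V ℓ))
    (c₁ : (tanner M).Walk v₁ v₁) (c₂ : (tanner M).Walk v₂ v₂)
    (h₁ : c₁.IsCycle) (h₂ : c₂.IsCycle) :
    c₁.length = c₂.length := by
  rw [length_eq_of_isCycle hM h₁, length_eq_of_isCycle hM h₂]
end
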